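/- Let n ≥ 1 and let ω = (ω₁, …, ω_n) be a tuple of positive natural numbers. For γ ∈ ℕⁿ define P(γ) = { −(γ_i + 1)/ω_i : 1 ≤ i ≤ n } ⊆ ℚ, and let G ⊆ ℕⁿ consist of the tuples k·e₁ for 0 ≤ k ≤ ω₁ − 1 together with the tuples k·e_i for 2 ≤ i ≤ n and 1 ≤ k ≤ ω_i − 2 (where e_i is the i-th standard basis vector). Then ⋃_{γ ∈ G} P(γ) = { −j/ω_i : 1 ≤ i ≤ n, 1 ≤ j ≤ ω_i }. -/

import Mathlib

theorem stmt8 (n : ℕ) (hn : 1 ≤ n) (ω : Fin n → ℕ) (hω : ∀ i, 1 ≤ ω i) :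
    (⋃ γ ∈ {γ : Fin n → ℕ |
        (∃ k : ℕ, k ≤ ω ⟨0, hn⟩ - 1 ∧ γ = Pi.single ⟨0, hn⟩ k) ∨
        (∃ i : Fin n, i ≠ ⟨0, hn⟩ ∧
          ∃ k : ℕ, 1 ≤ k ∧ k ≤ ω i - 2 ∧ γ = Pi.single i k)},
      {q : ℚ | ∃ i : Fin n, q = -((γ i : ℚ) + 1) / (ω i : ℚ)}) =
    {q : ℚ | ∃ i : Fin n, ∃ j : ℕ, 1 ≤ j ∧ j ≤ ω i ∧ q = -(j : ℚ) / (ω i : ℚ)} := by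
  ext q
  simp only [Set.mem_iUnion, Set.mem_ofPred_eq, exists_prop]
  constructor
  · rintro ⟨γ, hγ, i, rfl⟩
    refine ⟨i, γ i + 1, by omega, ?_, by push_cast; rfl⟩
    have hi := hω i
    rcases hγ with ⟨k, hk, rfl⟩ | ⟨a, -, k, hk₁, hk, rfl⟩
    · by_cases h : i = ⟨0, hn⟩
      · subst h
        rw [Pi.single_eq_same]
        omega
      · rw [Pi.single_eq_of_ne h]
        omega
    · by_cases h : i = a
      · subst h
        rw [Pi.single_eq_same]
        omega
      · rw [Pi.single_eq_of_ne h]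
        omega
  · rintro ⟨i, j, hj, hjω, rfl⟩
    by_cases hi : i = ⟨0, hn⟩
    · subst hi
      refine ⟨_, Or.inl ⟨j - 1, by omega, rfl⟩, ⟨0, hn⟩, ?_⟩
      rw [Pi.single_eq_same, Nat.cast_sub hj]
      simp
    · rcases (show j = 1 ∨ j = ω i ∨ (2 ≤ j ∧ j ≤ ω i - 1) by omega) with h | h | h
      · refine ⟨_, Or.inl ⟨0, by omega, rfl⟩, i, ?_⟩
        simp [h]
      · have h₀ := hω ⟨0, hn⟩
        refine ⟨_, Or.inl ⟨ω ⟨0, hn⟩ - 1, le_rfl, rfl⟩, ⟨0, hn⟩, ?_⟩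
        have hi₀ : (ω i : ℚ) ≠ 0 := by
          have := hω i
          positivity
        have h₁ : (ω ⟨0, hn⟩ : ℚ) ≠ 0 := by positivity
        rw [Pi.single_eq_same, Nat.cast_sub h₀, h, Nat.cast_one, sub_add_cancel,
          neg_div, neg_div, div_self hi₀, div_self h₁]
      · refine ⟨_, Or.inr ⟨i, hi, j - 1, by omega, by omega, rfl⟩, i, ?_⟩
        rw [Pi.single_eq_same, Nat.cast_sub hj]
        simp
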